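/- arXiv:2005.05492 — 2 statements merged into one kernel-verified Lean document; each statement's English description precedes it below -/
import Mathlib

section
/- Let N be a finite type and a ∈ ℝ^N, and let H = {x ∈ ℝ^N : ⟨a, x⟩ ≥ 0}, where ⟨a, x⟩ = Σ_i a_i x_i. (a) If a has at most one index i with a_i < 0, then H is closed under componentwise maximum. (b) If a has at least two indices with negative coordinates, then for every u with ⟨a, u⟩ = 0 and every ε > 0 there exist x, y ∈ ℝ^N with ⟨a, x⟩ = 0, ⟨a, y⟩ = 0, ‖x − u‖ ≤ ε, ‖y − u‖ ≤ ε, and ⟨a, x ⊕ y⟩ < 0; in particular x ⊕ y ∉ H. -/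
/-!
If at most one coefficient of `a` is negative, then `x ⊔ y` agrees at that coordinate with one of
`x`, `y`, and passing from that vector to `x ⊔ y` only increases coordinates with nonnegative
coefficients. If `a r` and `a s` are both negative, then `d = a s • e r - a r • e s` is orthogonal
to `a`, and its two nonzero coordinates sit at negative coefficients, so `a ⬝ᵥ |d| < 0`. For
`u` on the bounding hyperplane, so are `u ± t • d`, and their maximum `u + t • |d|` lies outside the
half-space for every `t > 0`, however small.
-/

section

variable {N : Type*}

section OrderedSemiring

variable [Fintype N] {R : Type*} [Semiring R] [LinearOrder R] [IsOrderedRing R] {a : N → R}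

theorem dotProduct_le_dotProduct_sup_left {x y : N → R} (h : ∀ i, a i < 0 → y i ≤ x i) :
    a ⬝ᵥ x ≤ a ⬝ᵥ (x ⊔ y) := by
  refine Finset.sum_le_sum fun i _ => ?_
  rw [Pi.sup_apply]
  obtain hi | hi := lt_or_ge (a i) 0
  · rw [sup_eq_left.2 (h i hi)]
  · exact mul_le_mul_of_nonneg_left le_sup_left hi

theorem min_dotProduct_le_dotProduct_sup (ha : {i | a i < 0}.Subsingleton) (x y : N → R) :
    min (a ⬝ᵥ x) (a ⬝ᵥ y) ≤ a ⬝ᵥ (x ⊔ y) := by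
  have one_dominates : (∀ i, a i < 0 → y i ≤ x i) ∨ (∀ i, a i < 0 → x i ≤ y i) := by
    by_contra! ⟨⟨i, hi, hxy⟩, ⟨j, hj, hyx⟩⟩
    obtain rfl : i = j := ha hi hj
    exact hxy.asymm hyx
  obtain hyx | hxy := one_dominates
  · exact min_le_of_left_le (dotProduct_le_dotProduct_sup_left hyx)
  · rw [sup_comm]
    exact min_le_of_right_le (dotProduct_le_dotProduct_sup_left hxy)

end OrderedSemiring

theorem add_sup_sub_eq_add_abs {G : Type*} [Lattice G] [AddGroup G] [AddLeftMono G] (u d : G) :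
    (u + d) ⊔ (u - d) = u + |d| := by
  rw [sub_eq_add_neg, ← add_sup, abs]

theorem abs_single_sub_single [DecidableEq N] {G : Type*} [AddCommGroup G] [LinearOrder G]
    [IsOrderedAddMonoid G] {r s : N} (hrs : r ≠ s) (p q : G) :
    |(Pi.single r p - Pi.single s q : N → G)| = Pi.single r |p| + Pi.single s |q| := by
  ext i
  obtain rfl | hr := eq_or_ne i r
  · simp [hrs]
  · obtain rfl | hs := eq_or_ne i s <;> simp [*]

theorem exists_dotProduct_eq_zero_and_dotProduct_abs_neg [Fintype N] {R : Type*} [CommRing R]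
    [LinearOrder R] [IsStrictOrderedRing R] {a : N → R} {r s : N} (hrs : r ≠ s) (hr : a r < 0)
    (hs : a s < 0) : ∃ d : N → R, a ⬝ᵥ d = 0 ∧ a ⬝ᵥ |d| < 0 := by
  classical
  refine ⟨Pi.single r (a s) - Pi.single s (a r), ?_, ?_⟩
  · rw [dotProduct_sub, dotProduct_single, dotProduct_single, mul_comm, sub_self]
  · rw [abs_single_sub_single hrs, dotProduct_add, dotProduct_single, dotProduct_single]
    exact add_neg (mul_neg_of_neg_of_pos hr (abs_pos.2 hs.ne))
      (mul_neg_of_neg_of_pos hs (abs_pos.2 hr.ne))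

section OrderedField

variable {K : Type*} [Field K] [LinearOrder K] [IsStrictOrderedRing K]

theorem exists_pos_sq_mul_le_sq (S : K) {ε : K} (hε : 0 < ε) : ∃ t > 0, t ^ 2 * S ≤ ε ^ 2 := by
  obtain ⟨t, ht, hlt⟩ := exists_pos_mul_lt hε (1 + |S|)
  refine ⟨t, ht, ?_⟩
  have hS : S ≤ (1 + |S|) ^ 2 := by nlinarith [le_abs_self S, abs_nonneg S]
  calc t ^ 2 * S ≤ t ^ 2 * (1 + |S|) ^ 2 := by gcongr
    _ = ((1 + |S|) * t) ^ 2 := by ring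
    _ ≤ ε ^ 2 := by gcongr

variable [Fintype N]

theorem exists_small_dotProduct_eq_zero_and_dotProduct_abs_neg {a : N → K} {r s : N}
    (hrs : r ≠ s) (hr : a r < 0) (hs : a s < 0) {ε : K} (hε : 0 < ε) :
    ∃ d : N → K, a ⬝ᵥ d = 0 ∧ a ⬝ᵥ |d| < 0 ∧ ∑ i, d i ^ 2 ≤ ε ^ 2 := by
  obtain ⟨d, hd, hd_abs⟩ := exists_dotProduct_eq_zero_and_dotProduct_abs_neg hrs hr hs
  obtain ⟨t, ht, ht_le⟩ := exists_pos_sq_mul_le_sq (∑ i, d i ^ 2) hε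
  have abs_smul_d : |t • d| = t • |d| := by
    ext i
    simp [abs_mul, abs_of_pos ht]
  refine ⟨t • d, ?_, ?_, ?_⟩
  · rw [dotProduct_smul, hd, smul_zero]
  · rw [abs_smul_d, dotProduct_smul]
    exact smul_neg_of_pos_of_neg ht hd_abs
  · simpa only [Pi.smul_apply, smul_eq_mul, mul_pow, ← Finset.mul_sum] using ht_le

theorem exists_dotProduct_sup_lt {a : N → K} {r s : N} (hrs : r ≠ s) (hr : a r < 0)
    (hs : a s < 0) (u : N → K) {ε : K} (hε : 0 < ε) :
    ∃ x y : N → K, a ⬝ᵥ x = a ⬝ᵥ u ∧ a ⬝ᵥ y = a ⬝ᵥ u ∧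
      ∑ i, (x i - u i) ^ 2 ≤ ε ^ 2 ∧ ∑ i, (y i - u i) ^ 2 ≤ ε ^ 2 ∧ a ⬝ᵥ (x ⊔ y) < a ⬝ᵥ u := by
  obtain ⟨d, hd, hd_abs, hd_le⟩ :=
    exists_small_dotProduct_eq_zero_and_dotProduct_abs_neg hrs hr hs hε
  refine ⟨u + d, u - d, ?_, ?_, ?_, ?_, ?_⟩
  · rw [dotProduct_add, hd, add_zero]
  · rw [dotProduct_sub, hd, sub_zero]
  · simpa using hd_le
  · simpa using hd_le
  · rw [add_sup_sub_eq_add_abs, dotProduct_add]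
    exact add_lt_of_neg_right _ hd_abs

theorem stmt8_general (a : N → K) (c : K) :
    ({i | a i < 0}.Subsingleton →
      ∀ x y : N → K, c ≤ a ⬝ᵥ x → c ≤ a ⬝ᵥ y → c ≤ a ⬝ᵥ (x ⊔ y)) ∧
    ((∃ r s : N, r ≠ s ∧ a r < 0 ∧ a s < 0) →
      ∀ u : N → K, a ⬝ᵥ u = c → ∀ ε : K, 0 < ε →
        ∃ x y : N → K, a ⬝ᵥ x = c ∧ a ⬝ᵥ y = c ∧
          ∑ i, (x i - u i) ^ 2 ≤ ε ^ 2 ∧ ∑ i, (y i - u i) ^ 2 ≤ ε ^ 2 ∧ a ⬝ᵥ (x ⊔ y) < c) := by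
  constructor
  · exact fun ha x y hx hy => (le_min hx hy).trans (min_dotProduct_le_dotProduct_sup ha x y)
  · rintro ⟨r, s, hrs, hr, hs⟩ u rfl ε hε
    exact exists_dotProduct_sup_lt hrs hr hs u hε

end OrderedField

end

/-- (a) A closed half-space `⟨a,·⟩ ≥ 0` with at most one negative coefficient is closed
under componentwise maximum.  (b) If `a` has at least two negative coefficients, then
arbitrarily close to any point of the bounding hyperplane there are two points of the
hyperplane whose componentwise maximum lies outside the half-space. -/
theorem stmt8 {N : Type*} [Fintype N] (a : N → ℝ) :
    (({i : N | a i < 0}.Subsingleton →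
      ∀ x y : N → ℝ, 0 ≤ ∑ i, a i * x i → 0 ≤ ∑ i, a i * y i →
        0 ≤ ∑ i, a i * (x ⊔ y) i) ∧
    ((∃ r s : N, r ≠ s ∧ a r < 0 ∧ a s < 0) →
      ∀ u : N → ℝ, ∑ i, a i * u i = 0 → ∀ ε : ℝ, 0 < ε →
        ∃ x y : N → ℝ,
          (∑ i, a i * x i = 0) ∧ (∑ i, a i * y i = 0) ∧
          Real.sqrt (∑ i, (x i - u i) ^ 2) ≤ ε ∧
          Real.sqrt (∑ i, (y i - u i) ^ 2) ≤ ε ∧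
          ∑ i, a i * (x ⊔ y) i < 0)) := by
  refine (stmt8_general a 0).imp_right fun h hrs u hu ε hε => ?_
  simpa only [Real.sqrt_le_left hε.le, dotProduct] using h hrs u hu ε hε
end

section
/- Let n ≥ 3 and let I be a nonempty proper subset of Fin n. Then δ(I) ∈ Ê_n, and δ(I) spans an extreme ray of Ê_n: for all A, B ∈ Ê_n with A + B = δ(I), there exist real numbers c, d ≥ 0 such that A = c · δ(I) and B = d · δ(I). -/
/-- The cone of quasi-semimetrics on `n` points. -/
def QSM (n : ℕ) : Set (Fin n → Fin n → ℝ) :=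
  {A | (∀ i, A i i = 0) ∧ (∀ i j : Fin n, i ≠ j → 0 ≤ A i j) ∧
    (∀ i j k : Fin n, i ≠ j → j ≠ k → i ≠ k → A i k ≤ A i j + A j k)}

/-- The oriented cut quasi-semimetric `δ(I)`. -/
def cutQSM (n : ℕ) (I : Finset (Fin n)) : Fin n → Fin n → ℝ :=
  fun i j => if i ∈ I ∧ j ∉ I then 1 else 0

/-!
Let `A` be a quasi-semimetric vanishing outside `S ×ˢ Sᶜ`. For `a, i ∈ S` and `b, j ∉ S` we have
`A a i = A j b = 0`, so going from `a` to `b` through `i` and `j` gives `A a b ≤ A i j`; by symmetry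
`A` is constant on `S ×ˢ Sᶜ`, that is, a multiple of `δ(S)`. By nonnegativity, both summands of a
decomposition of `δ(S)` vanish outside `S ×ˢ Sᶜ`.
-/

section OrientedCut

variable {X R : Type*} {S : Set X} {A : X → X → R}

/-- A quasi-semimetric: a nonnegative function of two points which vanishes on the diagonal and
satisfies the triangle inequality, but need be neither symmetric nor definite. The axioms range over
all points, not only over distinct ones as in `QSM`. -/
structure IsQuasiSemimetric [Zero R] [Add R] [LE R] (A : X → X → R) : Prop where
  self (i : X) : A i i = 0
  nonneg (i j : X) : 0 ≤ A i j
  triangle (i j k : X) : A i k ≤ A i j + A j k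

open Classical in
/-- The oriented cut `δ(S)` of an arbitrary set `S` of points, with values `0` and `1` in `R`. -/
noncomputable def orientedCut (R : Type*) [Zero R] [One R] (S : Set X) : X → X → R :=
  fun i j => if i ∈ S ∧ j ∉ S then 1 else 0

theorem orientedCut_eq_zero [Zero R] [One R] {i j : X} (hij : ¬(i ∈ S ∧ j ∉ S)) :
    orientedCut R S i j = 0 :=
  if_neg hij

theorem IsQuasiSemimetric.le_of_eq_zero [AddZeroClass R] [Preorder R] [AddLeftMono R]
    (hA : IsQuasiSemimetric A) {a b i j : X} (hai : A a i = 0) (hjb : A j b = 0) :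
    A a b ≤ A i j :=
  calc
    A a b ≤ A a i + A i b := hA.triangle a i b
    _ ≤ A a i + (A i j + A j b) := by gcongr; exact hA.triangle i j b
    _ = A i j := by rw [hai, hjb, zero_add, add_zero]

theorem isQuasiSemimetric_orientedCut [AddZeroClass R] [One R] [Preorder R] [ZeroLEOneClass R]
    (S : Set X) : IsQuasiSemimetric (orientedCut R S) where
  self i := orientedCut_eq_zero fun h => h.2 h.1
  nonneg i j := by
    unfold orientedCut
    split_ifs
    exacts [zero_le_one, le_rfl]
  triangle i j k := by
    by_cases hi : i ∈ S <;> by_cases hj : j ∈ S <;> by_cases hk : k ∈ S <;>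
      simp [orientedCut, hi, hj, hk]

variable [Semiring R] [PartialOrder R]

namespace IsQuasiSemimetric

theorem eq_smul_orientedCut [AddLeftMono R] (hA : IsQuasiSemimetric A)
    (hS : ∀ i j, ¬(i ∈ S ∧ j ∉ S) → A i j = 0) {a b : X} (ha : a ∈ S) (hb : b ∉ S) :
    A = A a b • orientedCut R S := by
  have eq_zero_of_right_mem {i j : X} (hj : j ∈ S) : A i j = 0 := hS i j fun h => h.2 hj
  have eq_zero_of_left_notMem {i j : X} (hi : i ∉ S) : A i j = 0 := hS i j fun h => hi h.1
  ext i j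
  by_cases hij : i ∈ S ∧ j ∉ S
  · have h_const : A i j = A a b :=
      (hA.le_of_eq_zero (eq_zero_of_right_mem ha) (eq_zero_of_left_notMem hb)).antisymm
        (hA.le_of_eq_zero (eq_zero_of_right_mem hij.1) (eq_zero_of_left_notMem hij.2))
    simp [orientedCut, hij, h_const]
  · simp [orientedCut_eq_zero hij, hS i j hij]

theorem exists_eq_smul_orientedCut [AddLeftMono R] (hA : IsQuasiSemimetric A)
    (hS : ∀ i j, ¬(i ∈ S ∧ j ∉ S) → A i j = 0) :
    ∃ c : R, 0 ≤ c ∧ A = c • orientedCut R S := by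
  by_cases hab : ∃ a b, a ∈ S ∧ b ∉ S
  · obtain ⟨a, b, ha, hb⟩ := hab
    exact ⟨A a b, hA.nonneg a b, hA.eq_smul_orientedCut hS ha hb⟩
  · have hA_zero : A = 0 := by
      ext i j
      exact hS i j fun h => hab ⟨i, j, h⟩
    exact ⟨0, le_rfl, by rw [hA_zero, zero_smul]⟩

end IsQuasiSemimetric

theorem stmt12_general [AddLeftMono R] [ZeroLEOneClass R] (S : Set X) :
    IsQuasiSemimetric (orientedCut R S) ∧
    ∀ A, IsQuasiSemimetric A → ∀ B, IsQuasiSemimetric B → A + B = orientedCut R S →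
      ∃ c d : R, 0 ≤ c ∧ 0 ≤ d ∧ A = c • orientedCut R S ∧ B = d • orientedCut R S := by
  refine ⟨isQuasiSemimetric_orientedCut S, fun A hA B hB hAB => ?_⟩
  have h_zero (i j : X) (hij : ¬(i ∈ S ∧ j ∉ S)) : A i j = 0 ∧ B i j = 0 := by
    have h_sum : A i j + B i j = 0 := (congrFun₂ hAB i j).trans (orientedCut_eq_zero hij)
    exact (add_eq_zero_iff_of_nonneg (hA.nonneg i j) (hB.nonneg i j)).mp h_sum
  obtain ⟨c, hc, hAc⟩ := hA.exists_eq_smul_orientedCut fun i j hij => (h_zero i j hij).1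
  obtain ⟨d, hd, hBd⟩ := hB.exists_eq_smul_orientedCut fun i j hij => (h_zero i j hij).2
  exact ⟨c, d, hc, hd, hAc, hBd⟩

end OrientedCut

theorem mem_QSM_iff {n : ℕ} {A : Fin n → Fin n → ℝ} : A ∈ QSM n ↔ IsQuasiSemimetric A := by
  refine ⟨fun ⟨h_self, h_nonneg, h_triangle⟩ => ?_,
    fun hA => ⟨hA.self, fun i j _ => hA.nonneg i j, fun i j k _ _ _ => hA.triangle i j k⟩⟩
  have h_nonneg' (i j : Fin n) : 0 ≤ A i j := by
    obtain rfl | hij := eq_or_ne i j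
    exacts [(h_self i).ge, h_nonneg i j hij]
  refine ⟨h_self, h_nonneg', fun i j k => ?_⟩
  obtain rfl | hij := eq_or_ne i j
  · rw [h_self, zero_add]
  obtain rfl | hjk := eq_or_ne j k
  · rw [h_self, add_zero]
  obtain rfl | hik := eq_or_ne i k
  · rw [h_self]
    exact add_nonneg (h_nonneg' i j) (h_nonneg' j i)
  exact h_triangle i j k hij hjk hik

theorem cutQSM_eq_orientedCut (n : ℕ) (I : Finset (Fin n)) :
    cutQSM n I = orientedCut ℝ (I : Set (Fin n)) := by
  ext i j
  simp [cutQSM, orientedCut]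

/-- Every oriented cut quasi-semimetric `δ(I)` lies in `Ê_n` and spans an extreme ray
there. -/
theorem stmt12 (n : ℕ) (hn : 3 ≤ n) (I : Finset (Fin n))
    (hI : I.Nonempty) (hI' : I ≠ Finset.univ) :
    cutQSM n I ∈ QSM n ∧
    ∀ A ∈ QSM n, ∀ B ∈ QSM n, A + B = cutQSM n I →
      ∃ c d : ℝ, 0 ≤ c ∧ 0 ≤ d ∧ A = c • cutQSM n I ∧ B = d • cutQSM n I := by
  simp only [mem_QSM_iff, cutQSM_eq_orientedCut]
  exact stmt12_general (I : Set (Fin n))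
end
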